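/- arXiv:math-ph/0611014 — 3 statements merged into one kernel-verified Lean document; each statement's English description precedes it below -/
import Mathlib

section
/- Let G be a group, V a complex vector space, θ : G → GL(V) a group homomorphism, and suppose V = V₊ ⊕ V₋ is a direct sum decomposition with projections P₊ and P₋. Let g, g₋, g₊ ∈ G satisfy g = g₋⁻¹g₊ and let α ∈ V. Set α₊ = P₊(θ(g₋)α) and α₋ = −P₋(θ(g₋)α). Then α₊ ∈ V₊, α₋ ∈ V₋, and in the semidirect product G ⋉_θ V one has (g₋,α₋)⁻¹ · (g₊,α₊) = (g,α). (Thus a Birkhoff factorization of g together with the decomposition of V yields a Birkhoff factorization of (g,α).) -/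
/-- The multiplication of the semidirect product `G ⋉_θ V`:
`(g,h)·(g',h') = (gg', h + θ(g)h')`. -/
def sdMul {G V : Type*} [Group G] [AddCommGroup V] [Module ℂ V]
    (θ : G →* (V ≃ₗ[ℂ] V)) (p q : G × V) : G × V :=
  (p.1 * q.1, p.2 + θ p.1 q.2)

/-- The inverse `(g,h)⁻¹ = (g⁻¹, -θ(g⁻¹)h)` in the semidirect product `G ⋉_θ V`, whose elements
are encoded as plain pairs. -/
def sdInv {G V : Type*} [Group G] [AddCommGroup V] [Module ℂ V]
    (θ : G →* (V ≃ₗ[ℂ] V)) (p : G × V) : G × V :=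
  (p.1⁻¹, -(θ p.1⁻¹ p.2))

section

variable {G V : Type*} [Group G] [AddCommGroup V] [Module ℂ V] (θ : G →* (V ≃ₗ[ℂ] V))

theorem sdInv_sdMul_cancel_left (p q : G × V) : sdMul θ (sdInv θ p) (sdMul θ p q) = q := by
  have hθ : θ p.1⁻¹ (θ p.1 q.2) = q.2 := by
    rw [map_inv]
    exact (θ p.1).symm_apply_apply q.2
  refine Prod.ext (inv_mul_cancel_left p.1 q.1) ?_
  calc -(θ p.1⁻¹ p.2) + θ p.1⁻¹ (p.2 + θ p.1 q.2)
      = θ p.1⁻¹ (θ p.1 q.2) := by rw [map_add, neg_add_cancel_left]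
    _ = q.2 := hθ

theorem statement9_general (Vp Vm : AddSubgroup V) (Pp Pm : V → V)
    (hPp : ∀ v, Pp v ∈ Vp) (hPm : ∀ v, Pm v ∈ Vm) (hsum : ∀ v, Pp v + Pm v = v)
    (g gm gp : G) (hg : g = gm⁻¹ * gp) (α : V) :
    Pp (θ gm α) ∈ Vp ∧
    -(Pm (θ gm α)) ∈ Vm ∧
    sdMul θ (sdInv θ (gm, -(Pm (θ gm α)))) (gp, Pp (θ gm α)) = (g, α) := by
  have hgp : gp = gm * g := (eq_inv_mul_iff_mul_eq.mp hg).symm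
  have hα : Pp (θ gm α) = -(Pm (θ gm α)) + θ gm α :=
    eq_neg_add_of_add_eq ((add_comm _ _).trans (hsum (θ gm α)))
  have hfactor : (gp, Pp (θ gm α)) = sdMul θ (gm, -(Pm (θ gm α))) (g, α) := Prod.ext hgp hα
  refine ⟨hPp _, Vm.neg_mem (hPm _), ?_⟩
  rw [hfactor, sdInv_sdMul_cancel_left]

end

/-- A Birkhoff factorization `g = g₋⁻¹g₊` in `G` together with a direct sum
decomposition `V = V₊ ⊕ V₋` (with projections `P₊`, `P₋`) yields a Birkhoff
factorization of `(g,α)` in the semidirect product `G ⋉_θ V`: setting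
`α₊ = P₊(θ(g₋)α)` and `α₋ = −P₋(θ(g₋)α)`, one has `α₊ ∈ V₊`, `α₋ ∈ V₋` and
`(g₋,α₋)⁻¹ · (g₊,α₊) = (g,α)`. -/
theorem statement9 (G V : Type*) [Group G] [AddCommGroup V] [Module ℂ V]
    (θ : G →* (V ≃ₗ[ℂ] V))
    (Vp Vm : Submodule ℂ V)
    (hdisjoint : Vp ⊓ Vm = ⊥)
    (Pp Pm : V →ₗ[ℂ] V)
    (hPp : ∀ v : V, Pp v ∈ Vp) (hPm : ∀ v : V, Pm v ∈ Vm)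
    (hsum : ∀ v : V, Pp v + Pm v = v)
    (g gm gp : G) (hg : g = gm⁻¹ * gp) (α : V) :
    Pp (θ gm α) ∈ Vp ∧
    -(Pm (θ gm α)) ∈ Vm ∧
    sdMul θ (gm⁻¹, -(θ gm⁻¹ (-(Pm (θ gm α))))) (gp, Pp (θ gm α)) = (g, α) :=
  statement9_general θ Vp.toAddSubgroup Vm.toAddSubgroup Pp Pm hPp hPm hsum g gm gp hg α
end

section
/- Consider the group G₀ = (ℂ^6, ⊕) with (x₁,x₂,x₃,x₄,x₅,s) ⊕ (y₁,y₂,y₃,y₄,y₅,t) = (x₁+e^s y₁, x₂+e^{2s}y₂, x₃+e^{3s}y₃, x₄+e^{3s}y₄+e^{2s}x₁y₂−e^s x₂y₁, x₅+e^{4s}y₅, s+t). Define vector fields on ℂ^6 (writing y = (y₁,…,y₅,t) and e₁,…,e₆ for the standard basis) by Y₁(y) = e^t(e₁ − y₂e₄), Y₂(y) = e^{2t}(e₂ + y₁e₄), Y₃(y) = e^{3t}e₃, Y₄(y) = e^{3t}e₄, Y₅(y) = e^{4t}e₅, Z₀(y) = e₆. Then these vector fields are left invariant: for every x, y ∈ ℂ^6,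 the left translation L_x : y ↦ x ⊕ y is holomorphic and its derivative satisfies D(L_x)(y)(V(y)) = V(x⊕y) for each V ∈ {Y₁, Y₂, Y₃, Y₄, Y₅, Z₀}. -/
/-- The group operation `⊕` on `ℂ^6`. -/
noncomputable def cSixMul (x y : Fin 6 → ℂ) : Fin 6 → ℂ :=
  ![x 0 + Complex.exp (x 5) * y 0,
    x 1 + Complex.exp (2 * x 5) * y 1,
    x 2 + Complex.exp (3 * x 5) * y 2,
    x 3 + Complex.exp (3 * x 5) * y 3
      + Complex.exp (2 * x 5) * x 0 * y 1 - Complex.exp (x 5) * x 1 * y 0,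
    x 4 + Complex.exp (4 * x 5) * y 4,
    x 5 + y 5]

/-- The standard basis vectors `e₁,…,e₆` of `ℂ^6` (indexed from `0`). -/
noncomputable def ee (i : Fin 6) : Fin 6 → ℂ := Pi.single i 1

/-- The vector field `Y₁(y) = e^t(e₁ − y₂e₄)`. -/
noncomputable def Y1 (y : Fin 6 → ℂ) : Fin 6 → ℂ :=
  Complex.exp (y 5) • (ee 0 - y 1 • ee 3)

/-- The vector field `Y₂(y) = e^{2t}(e₂ + y₁e₄)`. -/
noncomputable def Y2 (y : Fin 6 → ℂ) : Fin 6 → ℂ :=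
  Complex.exp (2 * y 5) • (ee 1 + y 0 • ee 3)

/-- The vector field `Y₃(y) = e^{3t}e₃`. -/
noncomputable def Y3 (y : Fin 6 → ℂ) : Fin 6 → ℂ :=
  Complex.exp (3 * y 5) • ee 2

/-- The vector field `Y₄(y) = e^{3t}e₄`. -/
noncomputable def Y4 (y : Fin 6 → ℂ) : Fin 6 → ℂ :=
  Complex.exp (3 * y 5) • ee 3

/-- The vector field `Y₅(y) = e^{4t}e₅`. -/
noncomputable def Y5 (y : Fin 6 → ℂ) : Fin 6 → ℂ :=
  Complex.exp (4 * y 5) • ee 4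

/-- The vector field `Z₀(y) = e₆`. -/
noncomputable def Z0 (_y : Fin 6 → ℂ) : Fin 6 → ℂ := ee 5

/-!
The vector fields `Y₁, …, Y₅, Z₀` are the translates `y ↦ D(L_y)(0)(eᵢ)` of the standard basis
vectors at the identity `0`. Associativity says `L_x ∘ L_y = L_{x ⊕ y}`, so differentiating at `0`
with the chain rule gives `D(L_x)(y) (D(L_y)(0) v) = D(L_{x ⊕ y})(0) v` for every vector `v`.
Each `L_x` is affine, and the columns of its linear part are the six vector fields at `x`.
-/

section LeftInvariantField

variable {𝕜 E : Type*} [NontriviallyNormedField 𝕜] [NormedAddCommGroup E] [NormedSpace 𝕜 E]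

variable (𝕜) in
/-- The left invariant vector field with value `v` at the identity `e` of the operation `op`,
obtained by pushing `v` forward along the left translations. The operation is an explicit binary
function because the group law at hand is not the addition of the vector space `E`. -/
noncomputable def leftInvariantField (op : E → E → E) (e v : E) : E → E :=
  fun y => fderiv 𝕜 (op y) e v

theorem fderiv_leftInvariantField {op : E → E → E} {e : E}
    (op_assoc : ∀ x y z, op (op x y) z = op x (op y z)) (op_id : ∀ x, op x e = x)
    (op_diff : ∀ x, Differentiable 𝕜 (op x)) (v x y : E) :
    fderiv 𝕜 (op x) y (leftInvariantField 𝕜 op e v y) =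
      leftInvariantField 𝕜 op e v (op x y) := by
  have translation_comp : op (op x y) = op x ∘ op y := funext (op_assoc x y)
  have chain_rule : fderiv 𝕜 (op x ∘ op y) e = (fderiv 𝕜 (op x) y).comp (fderiv 𝕜 (op y) e) := by
    rw [fderiv_comp e (op_diff x _) (op_diff y e), op_id]
  rw [leftInvariantField, leftInvariantField, translation_comp, chain_rule,
    ContinuousLinearMap.comp_apply]

end LeftInvariantField

theorem cSixMul_zero (x : Fin 6 → ℂ) : cSixMul x 0 = x := by
  ext i
  fin_cases i <;> simp [cSixMul]

theorem cSixMul_assoc (x y z : Fin 6 → ℂ) :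
    cSixMul (cSixMul x y) z = cSixMul x (cSixMul y z) := by
  have exp_three_mul (s : ℂ) : Complex.exp (3 * s) = Complex.exp (2 * s) * Complex.exp s := by
    rw [← Complex.exp_add]
    ring_nf
  ext i
  fin_cases i <;> simp [cSixMul, mul_add, Complex.exp_add, exp_three_mul] <;> ring1

open Matrix

/-- The Jacobian matrix of the left translation `y ↦ x ⊕ y`, which does not depend on `y`. -/
noncomputable def leftJacobian (x : Fin 6 → ℂ) : Matrix (Fin 6) (Fin 6) ℂ :=
  !![Complex.exp (x 5), 0, 0, 0, 0, 0;
    0, Complex.exp (2 * x 5), 0, 0, 0, 0;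
    0, 0, Complex.exp (3 * x 5), 0, 0, 0;
    -(Complex.exp (x 5) * x 1), Complex.exp (2 * x 5) * x 0, 0, Complex.exp (3 * x 5), 0, 0;
    0, 0, 0, 0, Complex.exp (4 * x 5), 0;
    0, 0, 0, 0, 0, 1]

theorem cSixMul_eq_add_mulVec (x y : Fin 6 → ℂ) : cSixMul x y = x + leftJacobian x *ᵥ y := by
  ext i
  fin_cases i <;> simp [cSixMul, leftJacobian, dotProduct, Fin.sum_univ_six,
    sub_eq_add_neg, add_comm, add_assoc]

theorem hasFDerivAt_cSixMul (x y : Fin 6 → ℂ) :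
    HasFDerivAt (cSixMul x) (leftJacobian x).mulVecLin.toContinuousLinearMap y := by
  rw [funext (cSixMul_eq_add_mulVec x)]
  exact (leftJacobian x).mulVecLin.toContinuousLinearMap.hasFDerivAt.const_add x

theorem differentiable_cSixMul (x : Fin 6 → ℂ) : Differentiable ℂ (cSixMul x) :=
  fun y => (hasFDerivAt_cSixMul x y).differentiableAt

theorem leftInvariantField_cSixMul_ee (i : Fin 6) (y : Fin 6 → ℂ) :
    leftInvariantField ℂ cSixMul 0 (ee i) y = (leftJacobian y).col i := by
  rw [leftInvariantField, (hasFDerivAt_cSixMul y 0).fderiv, ee]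
  exact mulVec_single_one _ i

theorem Y1_eq_leftInvariantField : Y1 = leftInvariantField ℂ cSixMul 0 (ee 0) := by
  ext y j
  rw [leftInvariantField_cSixMul_ee]
  fin_cases j <;> simp [Y1, ee, leftJacobian]

theorem Y2_eq_leftInvariantField : Y2 = leftInvariantField ℂ cSixMul 0 (ee 1) := by
  ext y j
  rw [leftInvariantField_cSixMul_ee]
  fin_cases j <;> simp [Y2, ee, leftJacobian]

theorem Y3_eq_leftInvariantField : Y3 = leftInvariantField ℂ cSixMul 0 (ee 2) := by
  ext y j
  rw [leftInvariantField_cSixMul_ee]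
  fin_cases j <;> simp [Y3, ee, leftJacobian]

theorem Y4_eq_leftInvariantField : Y4 = leftInvariantField ℂ cSixMul 0 (ee 3) := by
  ext y j
  rw [leftInvariantField_cSixMul_ee]
  fin_cases j <;> simp [Y4, ee, leftJacobian]

theorem Y5_eq_leftInvariantField : Y5 = leftInvariantField ℂ cSixMul 0 (ee 4) := by
  ext y j
  rw [leftInvariantField_cSixMul_ee]
  fin_cases j <;> simp [Y5, ee, leftJacobian]

theorem Z0_eq_leftInvariantField : Z0 = leftInvariantField ℂ cSixMul 0 (ee 5) := by
  ext y j
  rw [leftInvariantField_cSixMul_ee]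
  fin_cases j <;> simp [Z0, ee, leftJacobian]

theorem exists_eq_leftInvariantField {V : (Fin 6 → ℂ) → (Fin 6 → ℂ)}
    (hV : V ∈ ({Y1, Y2, Y3, Y4, Y5, Z0} : Set ((Fin 6 → ℂ) → (Fin 6 → ℂ)))) :
    ∃ i, V = leftInvariantField ℂ cSixMul 0 (ee i) := by
  rcases hV with rfl | rfl | rfl | rfl | rfl | rfl
  exacts [⟨0, Y1_eq_leftInvariantField⟩, ⟨1, Y2_eq_leftInvariantField⟩,
    ⟨2, Y3_eq_leftInvariantField⟩, ⟨3, Y4_eq_leftInvariantField⟩,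
    ⟨4, Y5_eq_leftInvariantField⟩, ⟨5, Z0_eq_leftInvariantField⟩]

/-- The vector fields `Y₁, Y₂, Y₃, Y₄, Y₅, Z₀` are left invariant on
`G₀ = (ℂ^6, ⊕)`: each left translation `L_x : y ↦ x ⊕ y` is holomorphic and
`D(L_x)(y)(V(y)) = V(x ⊕ y)`. -/
theorem statement14 :
    ∀ x y : Fin 6 → ℂ,
      DifferentiableAt ℂ (fun z => cSixMul x z) y ∧
      (∀ V ∈ ({Y1, Y2, Y3, Y4, Y5, Z0} :
          Set ((Fin 6 → ℂ) → (Fin 6 → ℂ))),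
        fderiv ℂ (fun z => cSixMul x z) y (V y) = V (cSixMul x y)) := by
  intro x y
  refine ⟨differentiable_cSixMul x y, fun V hV => ?_⟩
  obtain ⟨i, rfl⟩ := exists_eq_leftInvariantField hV
  exact fderiv_leftInvariantField cSixMul_assoc cSixMul_zero differentiable_cSixMul (ee i) x y
end

section
/- Consider the group G₀ = (ℂ^6, ⊕) with (x₁,x₂,x₃,x₄,x₅,s) ⊕ (y₁,y₂,y₃,y₄,y₅,t) = (x₁+e^s y₁, x₂+e^{2s}y₂, x₃+e^{3s}y₃, x₄+e^{3s}y₄+e^{2s}x₁y₂−e^s x₂y₁, x₅+e^{4s}y₅, s+t). Let a = (a₁,…,a₆) ∈ ℂ^6 with a₆ ≠ 0, and define γ_a : ℂ → ℂ^6 by γ_a(t) = ( a₁(e^{a₆t}−1)/a₆, a₂(e^{2a₆t}−1)/(2a₆), a₃(e^{3a₆t}−1)/(3a₆), a₄(e^{3a₆t}−1)/(3a₆) + (a₁a₂/(2a₆²))((e^{3a₆t}−1)/3 − e^{2a₆t} + e^{a₆t}), a₅(e^{4a₆t}−1)/(4a₆), a₆t ). Then γ_a is a one-parameter subgroup: γ_a(s+t)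 = γ_a(s) ⊕ γ_a(t) for all s, t ∈ ℂ, γ_a(0) = 0, and γ_a is differentiable with γ_a'(0) = a. (Thus exp(Σᵢaᵢ Yᵢ + a₆Z₀) = γ_a(1) in G₀.) -/
/-- The curve `γ_a : ℂ → ℂ^6` (for `a₆ ≠ 0`). -/
noncomputable def gammaCurve (a : Fin 6 → ℂ) (t : ℂ) : Fin 6 → ℂ :=
  ![a 0 * (Complex.exp (a 5 * t) - 1) / (a 5),
    a 1 * (Complex.exp (2 * a 5 * t) - 1) / (2 * a 5),
    a 2 * (Complex.exp (3 * a 5 * t) - 1) / (3 * a 5),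
    a 3 * (Complex.exp (3 * a 5 * t) - 1) / (3 * a 5)
      + (a 0 * a 1 / (2 * a 5 ^ 2)) *
          ((Complex.exp (3 * a 5 * t) - 1) / 3
            - Complex.exp (2 * a 5 * t) + Complex.exp (a 5 * t)),
    a 4 * (Complex.exp (4 * a 5 * t) - 1) / (4 * a 5),
    a 5 * t]

/-!
Apart from the fourth and the last, each coordinate of `γ_a` is a multiple of
`φ_c(t) = ∫₀ᵗ e^{cu} du`, and `φ_c(s + t) = φ_c(s) + e^{cs} φ_c(t)` is the corresponding coordinate
of the group law. The fourth coordinate also involves `∫₀ᵗ (φ_c φ_d' - φ_d φ_c')` with `d = 2c`,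
twice the signed area swept by the plane curve `(φ_c, φ_d)`, and the bilinear term by which this
area fails to be additive in the same twisted sense is the one in the group law.

Left translation `y ↦ x ⊕ y` is affine with value `x` at `0`, so the left-invariant vector field
that equals `a` at `0` is `x ↦ x ⊕ a - x`, and `γ_a` is its integral curve through `0`.
-/

open Complex

/-- The primitive `φ_c(t) = ∫₀ᵗ e^{cu} du`, in the closed form valid for `c ≠ 0`; for `c = 0` it has
the junk value `0` rather than `t`. -/
noncomputable def expPrimitive (c t : ℂ) : ℂ :=
  (exp (c * t) - 1) / c

/-- Twice the signed area swept by the plane curve `(φ_c, φ_d)`, that is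
`∫₀ᵗ (φ_c φ_d' - φ_d φ_c')`, in the closed form valid when `c`, `d` and `c + d` are nonzero. It is
the commutator term in the fourth coordinate of `γ_a`. -/
noncomputable def expArea (c d t : ℂ) : ℂ :=
  (expPrimitive (c + d) t - expPrimitive d t) / c - (expPrimitive (c + d) t - expPrimitive c t) / d

@[simp]
theorem expPrimitive_zero (c : ℂ) : expPrimitive c 0 = 0 := by
  simp [expPrimitive]

@[simp]
theorem expArea_zero (c d : ℂ) : expArea c d 0 = 0 := by
  simp [expArea]

theorem expPrimitive_add (c s t : ℂ) :
    expPrimitive c (s + t) = expPrimitive c s + exp (c * s) * expPrimitive c t := by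
  simp only [expPrimitive, mul_add, exp_add]
  ring

theorem expArea_add (c d s t : ℂ) :
    expArea c d (s + t) = expArea c d s + exp ((c + d) * s) * expArea c d t
      + exp (d * s) * expPrimitive c s * expPrimitive d t
      - exp (c * s) * expPrimitive d s * expPrimitive c t := by
  have bilinear_term (u v : ℂ) :
      exp (d * s) * expPrimitive c s * u - exp (c * s) * expPrimitive d s * v
        = (exp ((c + d) * s) - exp (d * s)) / c * u
          - (exp ((c + d) * s) - exp (c * s)) / d * v := by
    simp only [expPrimitive, add_mul, exp_add]
    ring
  rw [add_sub_assoc, bilinear_term]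
  simp only [expArea, expPrimitive_add]
  ring

theorem hasDerivAt_expPrimitive {c : ℂ} (hc : c ≠ 0) (t : ℂ) :
    HasDerivAt (expPrimitive c) (exp (c * t)) t := by
  have h := (((hasDerivAt_id t).const_mul c).cexp.sub_const 1).div_const c
  exact h.congr_deriv (by simp [hc])

theorem hasDerivAt_expArea {c d : ℂ} (hc : c ≠ 0) (hd : d ≠ 0) (hcd : c + d ≠ 0) (t : ℂ) :
    HasDerivAt (expArea c d)
      (expPrimitive c t * exp (d * t) - expPrimitive d t * exp (c * t)) t := by
  have hφc := hasDerivAt_expPrimitive hc t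
  have hφd := hasDerivAt_expPrimitive hd t
  have hφcd := hasDerivAt_expPrimitive hcd t
  refine (((hφcd.sub hφd).div_const c).sub ((hφcd.sub hφc).div_const d)).congr_deriv ?_
  simp only [expPrimitive, add_mul, exp_add]
  ring

theorem self_add_two_mul {R : Type*} [NonAssocSemiring R] (c : R) : c + 2 * c = 3 * c := by
  rw [← two_add_one_eq_three, add_one_mul, add_comm]

theorem gammaCurve_eq (a : Fin 6 → ℂ) (t : ℂ) :
    gammaCurve a t =
      ![a 0 * expPrimitive (a 5) t,
        a 1 * expPrimitive (2 * a 5) t,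
        a 2 * expPrimitive (3 * a 5) t,
        a 3 * expPrimitive (3 * a 5) t + a 0 * a 1 * expArea (a 5) (2 * a 5) t,
        a 4 * expPrimitive (4 * a 5) t,
        a 5 * t] := by
  simp only [gammaCurve, expArea, expPrimitive, self_add_two_mul]
  congrm ![?_, ?_, ?_, ?_, ?_, ?_] <;> ring

theorem zero_cSixMul (y : Fin 6 → ℂ) : cSixMul 0 y = y := by
  ext i
  fin_cases i <;> simp [cSixMul]

theorem gammaCurve_zero (a : Fin 6 → ℂ) : gammaCurve a 0 = 0 := by
  simp [gammaCurve_eq]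

theorem gammaCurve_add (a : Fin 6 → ℂ) (s t : ℂ) :
    gammaCurve a (s + t) = cSixMul (gammaCurve a s) (gammaCurve a t) := by
  simp only [gammaCurve_eq, cSixMul, Matrix.cons_val, expPrimitive_add, expArea_add,
    self_add_two_mul, ← mul_assoc]
  congrm ![?_, ?_, ?_, ?_, ?_, ?_] <;> ring

theorem cSixMul_gammaCurve_sub (a : Fin 6 → ℂ) (t : ℂ) :
    cSixMul (gammaCurve a t) a - gammaCurve a t =
      ![a 0 * exp (a 5 * t),
        a 1 * exp (2 * a 5 * t),
        a 2 * exp (3 * a 5 * t),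
        a 3 * exp (3 * a 5 * t) + a 0 * a 1 * (expPrimitive (a 5) t * exp (2 * a 5 * t)
          - expPrimitive (2 * a 5) t * exp (a 5 * t)),
        a 4 * exp (4 * a 5 * t),
        a 5] := by
  simp only [gammaCurve_eq, cSixMul, Matrix.cons_val, Matrix.cons_sub_cons, Matrix.empty_sub_empty,
    ← mul_assoc]
  congrm ![?_, ?_, ?_, ?_, ?_, ?_] <;> ring

theorem hasDerivAt_gammaCurve {a : Fin 6 → ℂ} (ha : a 5 ≠ 0) (t : ℂ) :
    HasDerivAt (gammaCurve a) (cSixMul (gammaCurve a t) a - gammaCurve a t) t := by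
  have h2 : 2 * a 5 ≠ 0 := mul_ne_zero two_ne_zero ha
  have h3 : 3 * a 5 ≠ 0 := mul_ne_zero three_ne_zero ha
  have h4 : 4 * a 5 ≠ 0 := mul_ne_zero (OfNat.ofNat_ne_zero 4) ha
  have hφ {c : ℂ} (hc : c ≠ 0) (b : ℂ) :
      HasDerivAt (fun u ↦ b * expPrimitive c u) (b * exp (c * t)) t :=
    (hasDerivAt_expPrimitive hc t).const_mul b
  have harea := (hasDerivAt_expArea ha h2 (self_add_two_mul (a 5) ▸ h3) t).const_mul (a 0 * a 1)
  rw [cSixMul_gammaCurve_sub, funext (gammaCurve_eq a), hasDerivAt_pi]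
  intro i
  fin_cases i
  exacts [hφ ha (a 0), hφ h2 (a 1), hφ h3 (a 2), (hφ h3 (a 3)).add harea, hφ h4 (a 4),
    hasDerivAt_const_mul (a 5)]

/-- For `a ∈ ℂ^6` with `a₆ ≠ 0`, the curve `γ_a` is a one-parameter subgroup
of `G₀ = (ℂ^6, ⊕)` with `γ_a(0) = 0`, and it is differentiable with
`γ_a'(0) = a`  (thus `exp(Σᵢaᵢ Yᵢ + a₆Z₀) = γ_a(1)` in `G₀`). -/
theorem statement16 (a : Fin 6 → ℂ) (ha : a 5 ≠ 0) :
    (∀ s t : ℂ, gammaCurve a (s + t) = cSixMul (gammaCurve a s) (gammaCurve a t)) ∧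
    gammaCurve a 0 = 0 ∧
    Differentiable ℂ (gammaCurve a) ∧
    HasDerivAt (gammaCurve a) a 0 := by
  refine ⟨gammaCurve_add a, gammaCurve_zero a,
    fun t ↦ (hasDerivAt_gammaCurve ha t).differentiableAt, ?_⟩
  have h := hasDerivAt_gammaCurve ha 0
  rwa [gammaCurve_zero, zero_cSixMul, sub_zero] at h
end
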